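/- Prior-aware BM-reduction with MWU subroutines satisfies a prior-dependent Φ-regret bound: let d ≥ 1, η > 0, ψ ∈ S with all entries positive, and let p_1,…,p_T ∈ Δ(d) and ℓ_1,…,ℓ_T ∈ [0,1]^d be arbitrary. Define φ_t ∈ S row-wise by φ_{t,i,j} ∝_j ψ_{ij}·exp(−η Σ_{τ=1}^{t−1} p_{τ,i} ℓ_{τ,j}). Then for every binary row-stochastic φ ∈ Φ_b, Σ_{t=1}^T ⟨φ_t − φ, p_t ℓ_t^T⟩ ≤ log(1/π_ψ(φ))/η + η T. -/

import Mathlib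

open Finset

/-- The binary row-stochastic matrix associated with a map `f : [d] → [d]`. -/
def toMat (d : ℕ) (f : Fin d → Fin d) : Matrix (Fin d) (Fin d) ℝ :=
  fun i j => if f i = j then 1 else 0

/-- The set `Φ_b` of binary row-stochastic `d × d` matrices. -/
noncomputable def PhiB (d : ℕ) : Finset (Matrix (Fin d) (Fin d) ℝ) := by
  classical exact Finset.image (toMat d) Finset.univ

/-- A matrix is row-stochastic if every row lies in the simplex. -/
def RowStochastic {d : ℕ} (φ : Matrix (Fin d) (Fin d) ℝ) : Prop :=
  ∀ i, (∀ j, 0 ≤ φ i j) ∧ ∑ j, φ i j = 1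

/-- A vector lies in the probability simplex `Δ(d)`. -/
def InSimplex (d : ℕ) (p : Fin d → ℝ) : Prop :=
  (∀ i, 0 ≤ p i) ∧ ∑ i, p i = 1

/-- The `ψ`-induced weight of `φ`: `π_ψ(φ) = ∏ i ⟨ψ_{i:}, φ_{i:}⟩`. -/
noncomputable def piInd {d : ℕ} (ψ φ : Matrix (Fin d) (Fin d) ℝ) : ℝ :=
  ∏ i, ∑ j, ψ i j * φ i j

/-- `ψ^k = ((d-2)/(d-1))·1 e_k^T + (1/(d(d-1)))·1 1^T`. -/
noncomputable def psiK (d : ℕ) (k : Fin d) : Matrix (Fin d) (Fin d) ℝ :=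
  fun _ j => ((d : ℝ) - 2) / ((d : ℝ) - 1) * (if j = k then 1 else 0) + 1 / ((d : ℝ) * ((d : ℝ) - 1))

/-- `ψ^{d+1} = ((d-2)/(d-1))·I + (1/(d(d-1)))·1 1^T`. -/
noncomputable def psiSelf (d : ℕ) : Matrix (Fin d) (Fin d) ℝ :=
  fun i j => ((d : ℝ) - 2) / ((d : ℝ) - 1) * (if i = j then 1 else 0) + 1 / ((d : ℝ) * ((d : ℝ) - 1))

/-- The special prior `π = (1/(2d)) Σ_k π_{ψ^k} + (1/2) π_{ψ^{d+1}}`. -/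
noncomputable def priorPi (d : ℕ) (φ : Matrix (Fin d) (Fin d) ℝ) : ℝ :=
  1 / (2 * d) * ∑ k : Fin d, piInd (psiK d k) φ + 1 / 2 * piInd (psiSelf d) φ

/-- `d^self_φ`: the number of indices `i` whose row equals `e_i^T`. -/
noncomputable def dSelf {d : ℕ} (φ : Matrix (Fin d) (Fin d) ℝ) : ℕ :=
  Nat.card {i : Fin d // φ i = fun j => if j = i then (1 : ℝ) else 0}

/-- `d^unif_φ`: the maximum multiplicity in the multiset of rows of `φ`. -/
noncomputable def dUnif {d : ℕ} (φ : Matrix (Fin d) (Fin d) ℝ) : ℕ :=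
  Finset.univ.sup fun i : Fin d => Nat.card {j : Fin d // φ j = φ i}

/-- Complexity measure for binary row-stochastic matrices. -/
noncomputable def cB {d : ℕ} (φ : Matrix (Fin d) (Fin d) ℝ) : ℕ :=
  min (d - dSelf φ) (d - dUnif φ + 1)

/-- `Q_φ`: distributions over `Φ_b` (indexed by maps `f : [d] → [d]`) averaging to `φ`. -/
def QSet (d : ℕ) (φ : Matrix (Fin d) (Fin d) ℝ) : Set ((Fin d → Fin d) → ℝ) :=
  {q | (∀ f, 0 ≤ q f) ∧ (∑ f, q f = 1) ∧ ∀ i j, ∑ f, q f * toMat d f i j = φ i j}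

/-- Extended complexity measure `c_φ = inf_{q ∈ Q_φ} E_{φ'∼q}[c_{φ'}]`. -/
noncomputable def cGen (d : ℕ) (φ : Matrix (Fin d) (Fin d) ℝ) : ℝ :=
  sInf ((fun q => ∑ f : Fin d → Fin d, q f * (cB (toMat d f) : ℝ)) '' QSet d φ)

/-- Matrix inner product `⟨φ, p ℓ^T⟩`. -/
noncomputable def lossInner {d : ℕ} (φ : Matrix (Fin d) (Fin d) ℝ) (p ℓ : Fin d → ℝ) : ℝ :=
  ∑ i, ∑ j, φ i j * (p i * ℓ j)

/-- The mean matrix `E_{f∼q}[φ_f]` of a weight vector over binary matrices. -/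
noncomputable def mixMat (d : ℕ) (q : (Fin d → Fin d) → ℝ) : Matrix (Fin d) (Fin d) ℝ :=
  fun i j => ∑ f, q f * toMat d f i j

/-- KL divergence of `q` (a distribution over `Φ_b`, indexed by maps) from the prior `π`. -/
noncomputable def klPrior (d : ℕ) (q : (Fin d → Fin d) → ℝ) : ℝ :=
  ∑ f, q f * Real.log (q f / priorPi d (toMat d f))

/-- The kernel `K(B,A) = Σ_{φ∈Φ_b} π(φ) Π_{i,j : φ_{ij}=1} B_{ij} A_{ij}`. -/
noncomputable def kernelK (d : ℕ) (B A : Matrix (Fin d) (Fin d) ℝ) : ℝ := by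
  classical exact
    ∑ φ ∈ PhiB d, priorPi d φ * ∏ i, ∏ j, if φ i j = 1 then B i j * A i j else 1

/-! Give every row its own copy of multiplicative weights, row `i` being charged the loss vector
`p_{t,i} ℓ_t`. The potential `∑ j, ψ j exp (-η ∑_{τ < t} c_τ j)` of a row starts at `1`, is
multiplied in round `t` by the mean of `exp (-η c_t)` under the current distribution, and at the end
is at least the term of any single column `k`. Bounding that mean by
`exp (-x) ≤ 1 - x + x² / 2` makes the regret of the row at most
`log (1 / ψ k) / η + (η / 2) ∑ t, p_{t,i}²`. Summed over the rows, the logarithms combine to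
`log (1 / π_ψ(φ))`, and `∑ i, p_{t,i}² ≤ 1` because `p_t` lies in the simplex. -/

theorem exp_neg_le_one_sub_add_sq_div_two {x : ℝ} (hx : 0 ≤ x) :
    Real.exp (-x) ≤ 1 - x + x ^ 2 / 2 := by
  have hpos : 0 < 1 + x + x ^ 2 / 2 := by positivity
  calc Real.exp (-x) = (Real.exp x)⁻¹ := Real.exp_neg x
    _ ≤ (1 + x + x ^ 2 / 2)⁻¹ := inv_anti₀ hpos (Real.quadratic_le_exp_of_nonneg hx)
    _ ≤ 1 - x + x ^ 2 / 2 := by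
      have hprod : (1 - x + x ^ 2 / 2) * (1 + x + x ^ 2 / 2) = 1 + x ^ 4 / 4 := by ring
      rw [inv_le_iff_one_le_mul₀ hpos, hprod]
      exact le_add_of_nonneg_right (by positivity)

section Simplex

variable {κ : Type*} [Fintype κ] {q x : κ → ℝ}

theorem sum_mul_exp_neg_mul_le_of_mem_stdSimplex {η : ℝ} (hη : 0 ≤ η) (hq : q ∈ stdSimplex ℝ κ)
    (hx : ∀ j, 0 ≤ x j) :
    ∑ j, q j * Real.exp (-η * x j) ≤
      Real.exp (-η * ∑ j, q j * x j + η ^ 2 / 2 * ∑ j, q j * x j ^ 2) :=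
  calc ∑ j, q j * Real.exp (-η * x j)
      ≤ ∑ j, q j * (1 - η * x j + (η * x j) ^ 2 / 2) := by
        gcongr with j
        · exact hq.1 j
        · rw [neg_mul]
          exact exp_neg_le_one_sub_add_sq_div_two (mul_nonneg hη (hx j))
    _ = ∑ j, (-η * (q j * x j) + η ^ 2 / 2 * (q j * x j ^ 2) + q j) :=
        sum_congr rfl fun j _ ↦ by ring
    _ = -η * ∑ j, q j * x j + η ^ 2 / 2 * ∑ j, q j * x j ^ 2 + 1 := by
        rw [sum_add_distrib, sum_add_distrib, ← mul_sum, ← mul_sum, hq.2]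
    _ ≤ _ := Real.add_one_le_exp _

theorem sum_mul_le_of_mem_stdSimplex {b : ℝ} (hq : q ∈ stdSimplex ℝ κ) (hx : ∀ j, x j ≤ b) :
    ∑ j, q j * x j ≤ b :=
  calc ∑ j, q j * x j ≤ ∑ j, q j * b := by
        gcongr with j
        · exact hq.1 j
        · exact hx j
    _ = b := by rw [← sum_mul, hq.2, one_mul]

theorem sum_sq_le_one_of_mem_stdSimplex (hq : q ∈ stdSimplex ℝ κ) : ∑ j, q j ^ 2 ≤ 1 := by
  simpa only [sq] using sum_mul_le_of_mem_stdSimplex hq fun j ↦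
    hq.2 ▸ single_le_sum (fun i _ ↦ hq.1 i) (mem_univ j)

end Simplex

section MultiplicativeWeights

variable {κ : Type*}

/-- The unnormalised weight of action `j` at the start of round `t` of multiplicative weights with
learning rate `η`, prior `ψ` and losses `c`. Rounds are numbered from `1`. -/
noncomputable def mwuWeight (η : ℝ) (ψ : κ → ℝ) (c : ℕ → κ → ℝ) (t : ℕ) (j : κ) : ℝ :=
  ψ j * Real.exp (-η * ∑ τ ∈ Ico 1 t, c τ j)

/-- The normalising constant of the weights at the start of round `t`, which serves as the potential
function of the regret analysis. -/
noncomputable def mwuPotential [Fintype κ] (η : ℝ) (ψ : κ → ℝ) (c : ℕ → κ → ℝ) (t : ℕ) : ℝ :=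
  ∑ j, mwuWeight η ψ c t j

/-- The distribution over actions that multiplicative weights plays in round `t`. -/
noncomputable def mwuDist [Fintype κ] (η : ℝ) (ψ : κ → ℝ) (c : ℕ → κ → ℝ) (t : ℕ) (j : κ) : ℝ :=
  mwuWeight η ψ c t j / mwuPotential η ψ c t

variable {η : ℝ} {ψ : κ → ℝ} {c : ℕ → κ → ℝ} {t T : ℕ}

theorem mwuWeight_succ (ht : 1 ≤ t) (j : κ) :
    mwuWeight η ψ c (t + 1) j = mwuWeight η ψ c t j * Real.exp (-η * c t j) := by
  simp only [mwuWeight, sum_Ico_succ_top ht, mul_add, Real.exp_add, mul_assoc]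

theorem mwuWeight_nonneg (hψ : ∀ j, 0 ≤ ψ j) (j : κ) : 0 ≤ mwuWeight η ψ c t j :=
  mul_nonneg (hψ j) (Real.exp_nonneg _)

variable [Fintype κ]

theorem mwuPotential_one (hψ : ψ ∈ stdSimplex ℝ κ) : mwuPotential η ψ c 1 = 1 := by
  simpa [mwuPotential, mwuWeight] using hψ.2

theorem mwuPotential_pos (hψ : ψ ∈ stdSimplex ℝ κ) : 0 < mwuPotential η ψ c t := by
  obtain ⟨j, -, hj⟩ : ∃ j ∈ univ, 0 < ψ j := exists_lt_of_sum_lt (by simp [hψ.2])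
  exact sum_pos' (fun i _ ↦ mwuWeight_nonneg hψ.1 i) ⟨j, mem_univ j, mul_pos hj (Real.exp_pos _)⟩

theorem mwuDist_mem_stdSimplex (hψ : ψ ∈ stdSimplex ℝ κ) : mwuDist η ψ c t ∈ stdSimplex ℝ κ := by
  refine ⟨fun j ↦ div_nonneg (mwuWeight_nonneg hψ.1 j) (mwuPotential_pos hψ).le, ?_⟩
  simp only [mwuDist]
  rw [← sum_div]
  exact div_self (mwuPotential_pos hψ).ne'

theorem mwuPotential_succ (hψ : ψ ∈ stdSimplex ℝ κ) (ht : 1 ≤ t) :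
    mwuPotential η ψ c (t + 1) =
      mwuPotential η ψ c t * ∑ j, mwuDist η ψ c t j * Real.exp (-η * c t j) := by
  rw [mul_sum, mwuPotential]
  refine sum_congr rfl fun j _ ↦ ?_
  rw [mwuWeight_succ ht, ← mul_assoc, mwuDist, mul_div_cancel₀ _ (mwuPotential_pos hψ).ne']

theorem log_mwuPotential_succ_le (hη : 0 ≤ η) (hψ : ψ ∈ stdSimplex ℝ κ) (ht : 1 ≤ t)
    (hc : ∀ j, 0 ≤ c t j) :
    Real.log (mwuPotential η ψ c (t + 1)) ≤ Real.log (mwuPotential η ψ c t) +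
      (-η * ∑ j, mwuDist η ψ c t j * c t j +
        η ^ 2 / 2 * ∑ j, mwuDist η ψ c t j * c t j ^ 2) := by
  have hmean := sum_mul_exp_neg_mul_le_of_mem_stdSimplex hη
    (mwuDist_mem_stdSimplex (η := η) (c := c) (t := t) hψ) hc
  calc Real.log (mwuPotential η ψ c (t + 1))
      ≤ Real.log (mwuPotential η ψ c t * Real.exp _) := by
        refine Real.log_le_log (mwuPotential_pos hψ) ?_
        rw [mwuPotential_succ hψ ht]
        exact mul_le_mul_of_nonneg_left hmean (mwuPotential_pos hψ).le
    _ = _ := by rw [Real.log_mul (mwuPotential_pos hψ).ne' (Real.exp_ne_zero _), Real.log_exp]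

theorem log_mwuPotential_le (hη : 0 ≤ η) (hψ : ψ ∈ stdSimplex ℝ κ)
    (hc : ∀ t ∈ Icc 1 T, ∀ j, 0 ≤ c t j) :
    Real.log (mwuPotential η ψ c (T + 1)) ≤
      -η * ∑ t ∈ Icc 1 T, ∑ j, mwuDist η ψ c t j * c t j +
        η ^ 2 / 2 * ∑ t ∈ Icc 1 T, ∑ j, mwuDist η ψ c t j * c t j ^ 2 := by
  induction T with
  | zero => simp [mwuPotential_one hψ]
  | succ T ih =>
    have hT : 1 ≤ T + 1 := Nat.le_add_left 1 T
    have hprev := ih fun t ht ↦ hc t (Icc_subset_Icc_right T.le_succ ht)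
    have hlast := log_mwuPotential_succ_le hη hψ hT (hc _ (right_mem_Icc.2 hT))
    rw [sum_Icc_succ_top hT, sum_Icc_succ_top hT]
    linarith

theorem mwu_regret_le (hη : 0 < η) (hψ : ψ ∈ stdSimplex ℝ κ)
    (hc : ∀ t ∈ Icc 1 T, ∀ j, 0 ≤ c t j) {k : κ} (hk : 0 < ψ k) :
    ∑ t ∈ Icc 1 T, ∑ j, mwuDist η ψ c t j * c t j - ∑ t ∈ Icc 1 T, c t k ≤
      Real.log (1 / ψ k) / η +
        η / 2 * ∑ t ∈ Icc 1 T, ∑ j, mwuDist η ψ c t j * c t j ^ 2 := by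
  have hweight : Real.log (mwuWeight η ψ c (T + 1) k) =
      Real.log (ψ k) - η * ∑ t ∈ Icc 1 T, c t k := by
    rw [mwuWeight, Real.log_mul hk.ne' (Real.exp_ne_zero _), Real.log_exp, neg_mul,
      ← sub_eq_add_neg, Ico_add_one_right_eq_Icc]
  have hle : mwuWeight η ψ c (T + 1) k ≤ mwuPotential η ψ c (T + 1) :=
    single_le_sum (fun j _ ↦ mwuWeight_nonneg hψ.1 j) (mem_univ k)
  have hlog : Real.log (mwuWeight η ψ c (T + 1) k) ≤ _ :=
    (Real.log_le_log (mul_pos hk (Real.exp_pos _)) hle).trans (log_mwuPotential_le hη.le hψ hc)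
  rw [hweight] at hlog
  rw [one_div, Real.log_inv, ← sub_le_iff_le_add, le_div_iff₀ hη]
  linarith

theorem mwu_regret_le_of_le (hη : 0 < η) (hψ : ψ ∈ stdSimplex ℝ κ) {b : ℕ → ℝ}
    (hc : ∀ t ∈ Icc 1 T, ∀ j, 0 ≤ c t j ∧ c t j ≤ b t) {k : κ} (hk : 0 < ψ k) :
    ∑ t ∈ Icc 1 T, ∑ j, mwuDist η ψ c t j * c t j - ∑ t ∈ Icc 1 T, c t k ≤
      Real.log (1 / ψ k) / η + η / 2 * ∑ t ∈ Icc 1 T, b t ^ 2 := by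
  refine (mwu_regret_le hη hψ (fun t ht j ↦ (hc t ht j).1) hk).trans ?_
  gcongr with t ht
  exact sum_mul_le_of_mem_stdSimplex (mwuDist_mem_stdSimplex hψ) fun j ↦
    pow_le_pow_left₀ (hc t ht j).1 (hc t ht j).2 2

end MultiplicativeWeights

theorem mem_PhiB {d : ℕ} {φ : Matrix (Fin d) (Fin d) ℝ} : φ ∈ PhiB d ↔ ∃ f, toMat d f = φ := by
  simp [PhiB]

theorem piInd_toMat {d : ℕ} (ψ : Matrix (Fin d) (Fin d) ℝ) (f : Fin d → Fin d) :
    piInd ψ (toMat d f) = ∏ i, ψ i (f i) := by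
  simp [piInd, toMat]

theorem stmt13_general {ι κ : Type*} [Fintype ι] [Fintype κ] [DecidableEq κ] {T : ℕ} {η : ℝ}
    (hη : 0 < η) {ψ : Matrix ι κ ℝ} (hψ : ∀ i, ψ i ∈ stdSimplex ℝ κ)
    {p : ℕ → ι → ℝ} {ℓ : ℕ → κ → ℝ} (hp : ∀ t ∈ Icc 1 T, p t ∈ stdSimplex ℝ ι)
    (hℓ : ∀ t ∈ Icc 1 T, ∀ j, 0 ≤ ℓ t j ∧ ℓ t j ≤ 1) {Φ : ℕ → Matrix ι κ ℝ}
    (hΦ : ∀ t ∈ Icc 1 T, ∀ i j, Φ t i j = mwuDist η (ψ i) (fun τ j ↦ p τ i * ℓ τ j) t j)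
    {f : ι → κ} (hf : ∀ i, 0 < ψ i (f i)) :
    ∑ t ∈ Icc 1 T, ∑ i, ∑ j, (Φ t i j - if f i = j then 1 else 0) * (p t i * ℓ t j) ≤
      Real.log (1 / ∏ i, ψ i (f i)) / η + η / 2 * T := by
  have hlog : Real.log (1 / ∏ i, ψ i (f i)) = ∑ i, Real.log (1 / ψ i (f i)) := by
    rw [one_div, ← prod_inv_distrib, Real.log_prod fun i _ ↦ inv_ne_zero (hf i).ne']
    simp only [one_div]
  have hrow (i : ι) :
      ∑ t ∈ Icc 1 T, ∑ j, (Φ t i j - if f i = j then 1 else 0) * (p t i * ℓ t j) ≤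
        Real.log (1 / ψ i (f i)) / η + η / 2 * ∑ t ∈ Icc 1 T, p t i ^ 2 := by
    refine le_of_eq_of_le ?_ (mwu_regret_le_of_le hη (hψ i) (fun t ht j ↦
      ⟨mul_nonneg ((hp t ht).1 i) (hℓ t ht j).1,
        mul_le_of_le_one_right ((hp t ht).1 i) (hℓ t ht j).2⟩) (hf i))
    rw [← sum_sub_distrib]
    refine sum_congr rfl fun t ht ↦ ?_
    simp only [hΦ t ht i, sub_mul, sum_sub_distrib, ite_mul, one_mul, zero_mul, sum_ite_eq,
      mem_univ, if_true]
  have hsq : ∑ i, ∑ t ∈ Icc 1 T, p t i ^ 2 ≤ T := by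
    rw [sum_comm]
    simpa using sum_le_sum fun t ht ↦ sum_sq_le_one_of_mem_stdSimplex (hp t ht)
  calc ∑ t ∈ Icc 1 T, ∑ i, ∑ j, (Φ t i j - if f i = j then 1 else 0) * (p t i * ℓ t j)
      = ∑ i, ∑ t ∈ Icc 1 T, ∑ j, (Φ t i j - if f i = j then 1 else 0) * (p t i * ℓ t j) :=
        sum_comm
    _ ≤ ∑ i, (Real.log (1 / ψ i (f i)) / η + η / 2 * ∑ t ∈ Icc 1 T, p t i ^ 2) :=
        sum_le_sum fun i _ ↦ hrow i
    _ = Real.log (1 / ∏ i, ψ i (f i)) / η + η / 2 * ∑ i, ∑ t ∈ Icc 1 T, p t i ^ 2 := by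
        rw [sum_add_distrib, ← sum_div, ← mul_sum, hlog]
    _ ≤ Real.log (1 / ∏ i, ψ i (f i)) / η + η / 2 * T := by gcongr

/-- Prior-aware BM-reduction with MWU subroutines: with `φ_t ∈ S` defined
row-wise by `φ_{t,i,j} ∝_j ψ_{ij} exp(−η Σ_{τ<t} p_{τ,i} ℓ_{τ,j})`, for every `φ ∈ Φ_b`,
`Σ_t ⟨φ_t − φ, p_t ℓ_t^T⟩ ≤ log(1/π_ψ(φ))/η + η T`. -/
theorem stmt13 (d T : ℕ) (hd : 1 ≤ d) (η : ℝ) (hη : 0 < η)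
    (ψ : Matrix (Fin d) (Fin d) ℝ) (hψ : RowStochastic ψ) (hψpos : ∀ i j, 0 < ψ i j)
    (p ℓ : ℕ → Fin d → ℝ)
    (hp : ∀ t ∈ Finset.Icc 1 T, InSimplex d (p t))
    (hℓ : ∀ t ∈ Finset.Icc 1 T, ∀ i, 0 ≤ ℓ t i ∧ ℓ t i ≤ 1)
    (Φ : ℕ → Matrix (Fin d) (Fin d) ℝ)
    (hΦ : ∀ t ∈ Finset.Icc 1 T, ∀ i j,
      Φ t i j =
        ψ i j * Real.exp (-η * ∑ τ ∈ Finset.Ico 1 t, p τ i * ℓ τ j) /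
          ∑ j', ψ i j' * Real.exp (-η * ∑ τ ∈ Finset.Ico 1 t, p τ i * ℓ τ j')) :
    ∀ φ ∈ PhiB d,
      (∑ t ∈ Finset.Icc 1 T, ∑ i, ∑ j, (Φ t i j - φ i j) * (p t i * ℓ t j)) ≤
        Real.log (1 / piInd ψ φ) / η + η * T := by
  intro φ hφ
  obtain ⟨f, rfl⟩ := mem_PhiB.1 hφ
  rw [piInd_toMat]
  exact (stmt13_general hη hψ hp hℓ hΦ fun i ↦ hψpos i (f i)).trans
    (by gcongr; exact half_le_self hη.le)
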